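/- Let η > 0, let ν be a probability measure on ℝ^{d'}, let b : ℝ^d × A × ℝ^{d'} → ℝ^d and r : ℝ^d × A → ℝ be measurable with A compact. Suppose (w̃, ρ̃) with w̃ continuous of at most linear growth solves the ergodic equation ρ̃ = sup_{a∈A} { η ∫ [w̃(x + b(x,a,e)) − w̃(x)] ν(de) + r(x,a) } for all x, and suppose (w̃', ρ̃') is another such solution. If for every admissible control the controlled state satisfies sup_{α} E[|X_t^{x,α}|]/t → 0 as t → ∞, then ρ̃ = ρ̃'. In other words, the ergodic constant in the jump HJB equation is unique among solutions with linear-growth relative value function. -/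

import Mathlib

open MeasureTheory Filter Topology

namespace ErgAux
open ProbabilityTheory

theorem aux_hull {X : Type*} [MeasurableSpace X] (μ : Measure X) [IsFiniteMeasure μ]
    (S U : Set X) (hU : MeasurableSet U) (h : S ⊆ U) : μ (toMeasurable μ S \ U) = 0 := by
  have h1 : μ (toMeasurable μ S) ≤ μ (toMeasurable μ S ∩ U) := by
    rw [measure_toMeasurable]
    exact measure_mono (Set.subset_inter (subset_toMeasurable _ _) h)
  have h2 := measure_inter_add_sdiff (μ := μ) (toMeasurable μ S) hU
  have h3 : μ (toMeasurable μ S ∩ U) ≠ ⊤ := measure_ne_top _ _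
  have h4 : μ (toMeasurable μ S ∩ U) + μ (toMeasurable μ S \ U) ≤ μ (toMeasurable μ S ∩ U) + 0 := by
    rw [h2]; simpa using h1
  simpa using (ENNReal.add_le_add_iff_left h3).1 h4

theorem exists_sel {X Y : Type*} [TopologicalSpace X] [PolishSpace X] [MeasurableSpace X]
    [BorelSpace X] [TopologicalSpace Y] [PolishSpace Y] [MeasurableSpace Y] [BorelSpace Y]
    (B : Set (X × Y)) (hBm : MeasurableSet B) (hB : ∀ x, ∃ y, (x, y) ∈ B)
    (μ : Measure X) [IsFiniteMeasure μ] :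
    ∃ h : X → Y, Measurable h ∧ ∀ᵐ x ∂μ, (x, h x) ∈ B := by
  have han := hBm.analyticSet
  rw [AnalyticSet] at han
  rcases han with rfl | ⟨f, hf, hfr⟩
  · have : IsEmpty X := ⟨fun x => by simpa using hB x⟩
    exact ⟨fun x => isEmptyElim x, measurable_of_empty _, by simp [Measure.eq_zero_of_isEmpty μ]⟩
  set g : (ℕ → ℕ) → X := fun σ => (f σ).1 with hg
  have hgc : Continuous g := continuous_fst.comp hf
  have hgs : ∀ x, ∃ σ, g σ = x := by
    intro x
    obtain ⟨y, hy⟩ := hB x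
    rw [← hfr] at hy
    obtain ⟨σ, hσ⟩ := hy
    exact ⟨σ, by simp [hg, hσ]⟩
  let C : List ℕ → Set (ℕ → ℕ) := fun s => {σ | PiNat.res σ s.length = s}
  let H : List ℕ → Set X := fun s => toMeasurable μ (g '' C s) ∩ closure (g '' C s)
  have hHm : ∀ s, MeasurableSet (H s) := fun s =>
    (measurableSet_toMeasurable _ _).inter isClosed_closure.measurableSet
  have hCH : ∀ s, g '' C s ⊆ H s := fun s =>
    Set.subset_inter (subset_toMeasurable _ _) subset_closure
  have hnull : ∀ᵐ x ∂μ, ∀ s, x ∈ H s → ∃ n, x ∈ H (n :: s) := by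
    rw [ae_all_iff]
    intro s
    have h0 := aux_hull μ (g '' C s) (⋃ n, H (n :: s)) (MeasurableSet.iUnion fun n => hHm _) (by
      rintro _ ⟨σ, hσ, rfl⟩
      refine Set.mem_iUnion.2 ⟨σ s.length, hCH _ ⟨σ, ?_, rfl⟩⟩
      have : PiNat.res σ s.length = s := hσ
      simp [C, PiNat.res_succ, this])
    rw [← compl_mem_ae_iff] at h0
    filter_upwards [h0] with x hx hxs
    by_contra hcon
    exact hx ⟨hxs.1, by simpa using hcon⟩
  let _ : MeasurableSpace (List ℕ) := ⊤
  have _ : DiscreteMeasurableSpace (List ℕ) := ⟨fun _ => trivial⟩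
  let φ : X × List ℕ → ℕ := fun p => sInf {n | p.1 ∈ H (n :: p.2)}
  have hφ : Measurable φ := by
    apply measurable_from_prod_countable_left
    intro s
    apply measurable_to_countable'
    intro n
    have : (fun x => φ (x, s)) ⁻¹' {n} =
        (H (n :: s) ∩ ⋂ m, ⋂ (_ : m < n), (H (m :: s))ᶜ) ∪
          (⋂ m, ({x | n = 0} ∩ (H (m :: s))ᶜ)) := by
      ext x
      simp only [φ, Set.mem_preimage, Set.mem_singleton_iff, Set.mem_union, Set.mem_inter_iff,
        Set.mem_iInter, Set.mem_compl_iff, Set.mem_ofPred_eq]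
      constructor
      · rintro rfl
        by_cases hne : {n | x ∈ H (n :: s)}.Nonempty
        · left
          exact ⟨Nat.sInf_mem hne, fun m hm => Nat.notMem_of_lt_sInf hm⟩
        · right
          rw [Set.not_nonempty_iff_eq_empty] at hne
          intro m
          refine ⟨by rw [hne]; simp, fun hm => ?_⟩
          have : m ∈ {n | x ∈ H (n :: s)} := hm
          rw [hne] at this; exact this
      · rintro (⟨h1, h2⟩ | h)
        · apply le_antisymm
          · exact Nat.sInf_le h1
          · by_contra hlt
            push Not at hlt
            exact h2 _ hlt (Nat.sInf_mem (s := {n | x ∈ H (n :: s)}) ⟨n, h1⟩)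
        · have : {n | x ∈ H (n :: s)} = ∅ := by
            ext m; simpa using (h m).2
          rw [this, (h 0).1]; simp
    rw [this]
    refine MeasurableSet.union ((hHm _).inter ?_) ?_
    · exact MeasurableSet.iInter fun m => MeasurableSet.iInter fun _ => (hHm _).compl
    · exact MeasurableSet.iInter fun m => (MeasurableSet.const _).inter (hHm _).compl
  let L : ℕ → X → List ℕ := fun k => Nat.rec (fun _ => []) (fun _ l x => φ (x, l x) :: l x) k
  have hL0 : ∀ x, L 0 x = [] := fun _ => rfl
  have hLs : ∀ k x, L (k+1) x = φ (x, L k x) :: L k x := fun _ _ => rfl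
  have hLm : ∀ k, Measurable (L k) := by
    intro k
    induction k with
    | zero => exact measurable_const
    | succ k ih =>
      have h1 : Measurable (fun x => φ (x, L k x)) := hφ.comp (measurable_id.prodMk ih)
      have h2 : Measurable (fun p : ℕ × List ℕ => p.1 :: p.2) := Measurable.of_discrete
      exact h2.comp (h1.prodMk ih)
  let σ : X → ℕ → ℕ := fun x k => φ (x, L k x)
  have hσm : Measurable σ := measurable_pi_lambda _ fun k => hφ.comp (measurable_id.prodMk (hLm k))
  have hres : ∀ x k, PiNat.res (σ x) k = L k x := by
    intro x k
    induction k with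
    | zero => rfl
    | succ k ih => rw [PiNat.res_succ, ih, hLs]
  refine ⟨fun x => (f (σ x)).2, (measurable_snd.comp hf.measurable).comp hσm, ?_⟩
  filter_upwards [hnull] with x hx
  have hmem : ∀ k, x ∈ H (L k x) := by
    intro k
    induction k with
    | zero =>
      obtain ⟨τ, hτ⟩ := hgs x
      exact hCH _ ⟨τ, rfl, hτ⟩
    | succ k ih =>
      rw [hLs]
      exact Nat.sInf_mem (s := {n | x ∈ H (n :: L k x)}) (hx _ ih)
  have hgx : g (σ x) = x := by
    by_contra hne
    have hV : ({x}ᶜ : Set X) ∈ 𝓝 (g (σ x)) := isOpen_compl_singleton.mem_nhds hne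
    obtain ⟨V, hV1, hVc, hV2⟩ := exists_mem_nhds_isClosed_subset hV
    have hpre : g ⁻¹' V ∈ 𝓝 (σ x) := hgc.continuousAt hV1
    obtain ⟨k, hk⟩ : ∃ k, PiNat.cylinder (σ x) k ⊆ g ⁻¹' V := by
      rw [mem_nhds_iff] at hpre
      obtain ⟨U, hU1, hU2, hU3⟩ := hpre
      obtain ⟨_, ⟨y, n, rfl⟩, hv, hvU⟩ :=
        (PiNat.isTopologicalBasis_cylinders (fun _ : ℕ => ℕ)).exists_subset_of_mem_open hU3 hU2
      refine ⟨n, ?_⟩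
      rw [PiNat.mem_cylinder_iff_eq.1 hv]
      exact hvU.trans hU1
    have hcl : closure (g '' C (L k x)) ⊆ V := by
      apply closure_minimal _ hVc
      rintro _ ⟨τ, hτ, rfl⟩
      apply hk
      rw [PiNat.cylinder_eq_res]
      have : PiNat.res τ (L k x).length = L k x := hτ
      have hl : (L k x).length = k := by rw [← hres, PiNat.res_length]
      rw [hl] at this
      simp [this, hres]
    exact hV2 (hcl (hmem k).2) rfl
  have : (x, (f (σ x)).2) = f (σ x) := Prod.ext hgx.symm rfl
  rw [this, ← hfr]
  exact Set.mem_range_self _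


theorem exists_policy {X Y : Type*} [TopologicalSpace X] [PolishSpace X] [MeasurableSpace X]
    [BorelSpace X] [TopologicalSpace Y] [PolishSpace Y] [MeasurableSpace Y] [BorelSpace Y]
    (B : Set (X × Y)) (hBm : MeasurableSet B) (hB : ∀ x, ∃ y, (x, y) ∈ B)
    (K : Kernel (X × Y) X) [IsMarkovKernel K] (x0 : X) :
    ∃ (a : X → Y) (N : Set X), Measurable a ∧ MeasurableSet N ∧ x0 ∉ N ∧
      ∀ y ∉ N, (y, a y) ∈ B ∧ K (y, a y) N = 0 := by
  let good : Set X × (X → Y) × Measure X → Prop := fun S =>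
    MeasurableSet S.1 ∧ Measurable S.2.1 ∧ IsFiniteMeasure S.2.2 ∧
      (∀ y ∈ S.1, (y, S.2.1 y) ∈ B) ∧ S.2.2 S.1ᶜ = 0
  have step : ∀ S : {S // good S}, ∃ S' : {S // good S}, S.1.1 ⊆ S'.1.1 ∧
      Set.EqOn S'.1.2.1 S.1.2.1 S.1.1 ∧
      S'.1.2.2 = S.1.2.2.bind (fun y => K (y, S.1.2.1 y)) := by
    rintro ⟨⟨D, a, μ⟩, hD, ha, hμ, hDB, hμD⟩
    simp only at hD ha hμ hDB hμD
    have hk : Measurable (fun y => K (y, a y)) := K.measurable.comp (measurable_id.prodMk ha)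
    have hfin : IsFiniteMeasure (μ.bind (fun y => K (y, a y))) := by
      constructor
      rw [Measure.bind_apply MeasurableSet.univ hk.aemeasurable]
      simp
    obtain ⟨h, hh, hhB⟩ := exists_sel B hBm hB (μ.bind (fun y => K (y, a y)))
    have hGm : MeasurableSet {y | (y, h y) ∈ B} := (measurable_id.prodMk hh) hBm
    classical
    refine ⟨⟨⟨D ∪ {y | (y, h y) ∈ B}, D.piecewise a h, μ.bind (fun y => K (y, a y))⟩,
      hD.union hGm, ha.piecewise hD hh, hfin, ?_, ?_⟩, Set.subset_union_left, ?_, rfl⟩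
    · rintro y hy
      by_cases hyD : y ∈ D
      · simpa [hyD] using hDB y hyD
      · simpa [hyD] using hy
    · refine measure_mono_null ?_ hhB
      intro y hy; simp at hy; simpa using hy.2
    · exact Set.piecewise_eqOn _ _ _
  have init : ∃ S : {S // good S}, S.1.2.2 = Measure.dirac x0 := by
    obtain ⟨h, hh, hhB⟩ := exists_sel B hBm hB (Measure.dirac x0)
    exact ⟨⟨⟨{y | (y, h y) ∈ B}, h, Measure.dirac x0⟩, (measurable_id.prodMk hh) hBm, hh,
      inferInstance, fun y hy => hy, hhB⟩, rfl⟩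
  choose nxt hn1 hn2 hn3 using step
  obtain ⟨S0, hS0⟩ := init
  let S : ℕ → {S // good S} := fun n => Nat.rec S0 (fun _ s => nxt s) n
  have hSs : ∀ n, S (n+1) = nxt (S n) := fun _ => rfl
  have hmono : Monotone (fun n => (S n).1.1) :=
    monotone_nat_of_le_succ fun n => by simpa only [hSs] using hn1 (S n)
  have heqon : ∀ n k, Set.EqOn (S (n+k)).1.2.1 (S n).1.2.1 (S n).1.1 := by
    intro n k
    induction k with
    | zero => exact fun _ _ => rfl
    | succ k ih =>
      intro y hy
      rw [← ih hy, ← add_assoc, hSs]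
      exact hn2 _ (hmono (Nat.le_add_right n k) hy)
  obtain ⟨a, ham, haE⟩ := exists_measurable_piecewise (fun n => (S n).1.1) (fun n => (S n).2.1)
    (fun n => (S n).1.2.1) (fun n => (S n).2.2.1) (by
      have key : ∀ i j, i ≤ j → Set.EqOn (S i).1.2.1 (S j).1.2.1 ((S i).1.1 ∩ (S j).1.1) := by
        intro i j hij y hy
        obtain ⟨k, rfl⟩ := Nat.exists_eq_add_of_le hij
        exact (heqon i k hy.1).symm
      intro i j _
      rcases le_total i j with h | h
      · exact key i j h
      · exact fun y hy => (key j i h ⟨hy.2, hy.1⟩).symm)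
  have hk : Measurable (fun y => K (y, a y)) := K.measurable.comp (measurable_id.prodMk ham)
  let M : ℕ → Set X := fun k => Nat.rec (⋃ n, (S n).1.1)ᶜ
    (fun _ T => T ∪ {y | K (y, a y) T ≠ 0}) k
  have hMs : ∀ k, M (k+1) = M k ∪ {y | K (y, a y) (M k) ≠ 0} := fun _ => rfl
  have hMm : ∀ k, MeasurableSet (M k) := by
    intro k
    induction k with
    | zero => exact (MeasurableSet.iUnion fun n => (S n).2.1).compl
    | succ k ih =>
      rw [hMs]
      refine ih.union ?_
      exact ((Measure.measurable_coe ih).comp hk) (measurableSet_singleton 0).compl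
  have hnull : ∀ k n, (S n).1.2.2 (M k) = 0 := by
    intro k
    induction k with
    | zero =>
      intro n
      refine measure_mono_null ?_ (S n).2.2.2.2.2
      exact Set.compl_subset_compl.2 (Set.subset_iUnion (fun n => (S n).1.1) n)
    | succ k ih =>
      intro n
      rw [hMs, measure_union_null_iff]
      refine ⟨ih n, ?_⟩
      have h1 := ih (n+1)
      have hkn : Measurable (fun y => K (y, (S n).1.2.1 y)) :=
        K.measurable.comp (measurable_id.prodMk (S n).2.2.1)
      have hkm : Measurable (fun y => K (y, (S n).1.2.1 y) (M k)) :=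
        (Measure.measurable_coe (hMm k)).comp hkn
      rw [hSs, hn3, Measure.bind_apply (hMm k) hkn.aemeasurable,
        lintegral_eq_zero_iff hkm] at h1
      have h2 : ∀ᵐ y ∂(S n).1.2.2, y ∈ (S n).1.1 := (S n).2.2.2.2.2
      have h3 : ∀ᵐ y ∂(S n).1.2.2, ¬ (K (y, a y) (M k) ≠ 0) := by
        filter_upwards [h1, h2] with y hy1 hy2
        rw [haE n hy2]; simpa using hy1
      simpa [ae_iff] using h3
  refine ⟨a, ⋃ k, M k, ham, MeasurableSet.iUnion hMm, ?_, ?_⟩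
  · intro hx
    obtain ⟨k, hk'⟩ := Set.mem_iUnion.1 hx
    have := hnull k 0
    have h0 : (S 0).1.2.2 = Measure.dirac x0 := hS0
    rw [h0, Measure.dirac_apply' _ (hMm k)] at this
    simp [hk'] at this
  · intro y hy
    simp only [Set.mem_iUnion, not_exists] at hy
    constructor
    · have : y ∈ ⋃ n, (S n).1.1 := by
        have := hy 0
        by_contra h; exact this h
      obtain ⟨n, hn⟩ := Set.mem_iUnion.1 this
      rw [haE n hn]
      exact (S n).2.2.2.2.1 y hn
    · rw [measure_iUnion_null_iff]
      intro k
      have := hy (k+1)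
      rw [hMs] at this
      by_contra h
      exact this (Or.inr h)


theorem gron (η K T : ℝ) (hη : 0 < η) (u : ℝ → ℝ) (hum : Measurable u)
    (hu0 : ∀ t, 0 ≤ u t) (hu1 : ∀ t, u t ≤ 1)
    (h : ∀ t, 0 ≤ t → t ≤ T → u t ≤ K + η * ∫ s in (0:ℝ)..t, u s) :
    ∀ t, 0 ≤ t → t ≤ T → u t ≤ K * Real.exp (η * t) := by
  have hui : ∀ a b : ℝ, IntervalIntegrable u volume a b := by
    intro a b
    refine (intervalIntegrable_const (c := (1:ℝ))).mono_fun hum.aestronglyMeasurable ?_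
    refine Eventually.of_forall fun t => ?_
    simp [abs_of_nonneg (hu0 t), hu1 t]
  by_cases hT : 0 ≤ T
  swap
  · intro t h1 h2; exact absurd (h1.trans h2) hT
  have hK : 0 ≤ K := by
    have := h 0 le_rfl hT
    simp at this
    exact (hu0 0).trans this
  have main : ∀ n : ℕ, ∀ t, 0 ≤ t → t ≤ T →
      u t ≤ K * Real.exp (η * t) + (η * t) ^ n / (n.factorial : ℝ) := by
    intro n
    induction n with
    | zero =>
      intro t _ _
      have : 0 ≤ K * Real.exp (η * t) := by positivity
      simp; linarith [hu1 t]
    | succ n ih =>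
      intro t ht0 htT
      have hd : ∀ s ∈ Set.uIcc 0 t, HasDerivAt
          (fun s => (K * Real.exp (η * s) + (η * s) ^ (n+1) / ((n+1).factorial : ℝ)))
          (η * (K * Real.exp (η * s) + (η * s) ^ n / (n.factorial : ℝ))) s := by
        intro s _
        have h1 : HasDerivAt (fun s : ℝ => η * s) η s := by
          simpa using (hasDerivAt_id s).const_mul η
        have h2 := (h1.exp.const_mul K).add ((h1.pow (n+1)).div_const ((n+1).factorial : ℝ))
        refine h2.congr_deriv ?_
        rw [Nat.factorial_succ]
        have : (n.factorial : ℝ) ≠ 0 := by positivity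
        push_cast
        field_simp
      have hc : Continuous (fun s => η * (K * Real.exp (η * s) + (η * s) ^ n / (n.factorial : ℝ))) := by
        fun_prop
      have hint := intervalIntegral.integral_eq_sub_of_hasDerivAt hd (hc.intervalIntegrable _ _)
      have hle : ∫ s in (0:ℝ)..t, η * u s ≤ ∫ s in (0:ℝ)..t,
          η * (K * Real.exp (η * s) + (η * s) ^ n / (n.factorial : ℝ)) := by
        apply intervalIntegral.integral_mono_on ht0 ((hui _ _).const_mul η)
          (hc.intervalIntegrable _ _)
        intro s hs
        exact mul_le_mul_of_nonneg_left (ih s hs.1 (hs.2.trans htT)) hη.le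
      rw [hint, intervalIntegral.integral_const_mul] at hle
      have := h t ht0 htT
      simp at hle
      linarith
  intro t ht0 htT
  have hlim : Tendsto (fun n : ℕ => K * Real.exp (η * t) + (η * t) ^ n / (n.factorial : ℝ)) atTop
      (𝓝 (K * Real.exp (η * t) + 0)) :=
    tendsto_const_nhds.add (FloorSemiring.tendsto_pow_div_factorial_atTop (η * t))
  rw [add_zero] at hlim
  exact ge_of_tendsto' hlim fun n => main n t ht0 htT

theorem prim_meas (G : ℝ → ℝ) : Measurable (fun t => ∫ s in (0:ℝ)..(max t 0), G s) := by
  classical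
  let J : Set ℝ := {t | IntervalIntegrable G volume 0 (max t 0)}
  have hlow : ∀ t ∈ J, ∀ s ≤ t, s ∈ J := by
    intro t ht s hs
    refine IntervalIntegrable.mono_set (b := max t 0) (a := 0) ht ?_
    rw [Set.uIcc_of_le (le_max_right _ _), Set.uIcc_of_le (le_max_right _ _)]
    exact Set.Icc_subset_Icc le_rfl (max_le_max hs le_rfl)
  have hcI : ∀ t ∈ J, ContinuousOn (fun t => ∫ s in (0:ℝ)..(max t 0), G s) (Set.Iic t) := by
    intro t ht
    have h1 := intervalIntegral.continuousOn_primitive_interval' (a := 0) ht Set.left_mem_uIcc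
    refine h1.comp (by fun_prop : Continuous fun t : ℝ => max t 0).continuousOn ?_
    intro s hs
    rw [Set.uIcc_of_le (le_max_right _ _)]
    exact ⟨le_max_right _ _, max_le_max hs le_rfl⟩
  have hJm : MeasurableSet J := by
    apply Set.OrdConnected.measurableSet
    exact ⟨fun a _ b hb c hc => hlow b hb c hc.2⟩
  have hc : ContinuousOn (fun t => ∫ s in (0:ℝ)..(max t 0), G s) J := by
    intro t ht
    by_cases h : ∃ t1 ∈ J, t < t1
    · obtain ⟨t1, ht1, hlt⟩ := h
      exact ((hcI t1 ht1).continuousAt (Iic_mem_nhds hlt)).continuousWithinAt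
    · push Not at h
      exact (hcI t ht t Set.self_mem_Iic).mono h
  have := hc.measurable_piecewise (continuousOn_const (c := (0:ℝ))) hJm
  convert this using 1
  ext t
  by_cases ht : t ∈ J
  · simp [ht]
  · rw [Set.piecewise_eq_of_notMem _ _ _ ht]
    exact intervalIntegral.integral_undef ht

theorem meas_family {X : Type*} [TopologicalSpace X] [TopologicalSpace.PseudoMetrizableSpace X]
    [MeasurableSpace X] [BorelSpace X] (P : ℝ → Measure X) (hP : ∀ t, IsProbabilityMeasure (P t))
    (h : ∀ w : X → ℝ, Continuous w → (∃ C, ∀ y, |w y| ≤ C) →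
      ∃ (c : ℝ) (G : ℝ → ℝ), ∀ t, 0 ≤ t → ∫ y, w y ∂P t = c + ∫ s in (0:ℝ)..t, G s) :
    Measurable fun s => P (max s 0) := by
  have hw : ∀ w : X → ℝ, Continuous w → (∃ C, ∀ y, |w y| ≤ C) →
      Measurable (fun s => ∫ y, w y ∂P (max s 0)) := by
    intro w hc hb
    obtain ⟨c, G, hG⟩ := h w hc hb
    simp_rw [fun s : ℝ => hG (max s 0) (le_max_right _ _)]
    exact measurable_const.add (prim_meas G)
  apply Measurable.measure_of_isPiSystem_of_isProbabilityMeasure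
    (BorelSpace.measurable_eq.trans borel_eq_generateFrom_isClosed) isPiSystem_isClosed
  intro F hF
  have hF : IsClosed F := hF
  have hlim : ∀ s, Tendsto (fun n ↦ ∫⁻ x, hF.apprSeq n x ∂(P (max s 0))) atTop
      (𝓝 (P (max s 0) F)) := fun s => HasOuterApproxClosed.tendsto_lintegral_apprSeq hF _
  refine measurable_of_tendsto_metrizable (f := fun n s => ∫⁻ x, hF.apprSeq n x ∂(P (max s 0)))
    ?_ (tendsto_pi_nhds.2 hlim)
  intro n
  have h1 : ∀ s, ∫⁻ x, hF.apprSeq n x ∂(P (max s 0)) =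
      ENNReal.ofReal (∫ x, ((hF.apprSeq n x : NNReal) : ℝ) ∂(P (max s 0))) := by
    intro s
    rw [ofReal_integral_eq_lintegral_ofReal]
    · simp
    · exact BoundedContinuousFunction.integrable_of_nnreal _ _
    · exact Eventually.of_forall fun _ => NNReal.coe_nonneg _
  simp_rw [h1]
  refine (hw _ ?_ ⟨1, ?_⟩).ennreal_ofReal
  · exact NNReal.continuous_coe.comp (hF.apprSeq n).continuous
  · intro y
    rw [NNReal.abs_eq]
    exact_mod_cast HasOuterApproxClosed.apprSeq_apply_le_one hF n y

theorem integral_bind_aux {X Z : Type*} [MeasurableSpace X] [MeasurableSpace Z] (κ : Kernel Z X)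
    (μ : Measure Z) (f : X → ℝ) (hf : Integrable f (κ ∘ₘ μ)) :
    ∫ y, f y ∂(κ ∘ₘ μ) = ∫ z, ∫ y, f y ∂κ z ∂μ := by
  rw [Measure.comp_eq_comp_const_apply] at hf ⊢
  rw [Kernel.integral_comp hf]
  simp

theorem fin_bind {X Z : Type*} [MeasurableSpace X] [MeasurableSpace Z] (κ : Kernel Z X)
    [IsMarkovKernel κ] (μ : Measure Z) [IsFiniteMeasure μ] : IsFiniteMeasure (κ ∘ₘ μ) :=
  inferInstance

theorem dynkin_measure {X : Type*} [TopologicalSpace X] [TopologicalSpace.PseudoMetrizableSpace X]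
    [MeasurableSpace X] [BorelSpace X] (Q : Kernel ℝ X) [IsMarkovKernel Q] (κ : Kernel X X)
    [IsMarkovKernel κ] (x : X) (η : ℝ) (hη : 0 < η)
    (h : ∀ w : X → ℝ, Continuous w → (∃ C, ∀ y, |w y| ≤ C) → ∀ t, 0 ≤ t →
      ∫ y, w y ∂Q t = w x + ∫ s in (0:ℝ)..t, ∫ y, η * (∫ z, w z ∂κ y - w y) ∂Q s)
    (t : ℝ) (ht : 0 ≤ t) :
    Q t + ENNReal.ofReal η • (Q ∘ₘ volume.restrict (Set.Ioc 0 t)) =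
      Measure.dirac x + ENNReal.ofReal η • (κ ∘ₘ (Q ∘ₘ volume.restrict (Set.Ioc 0 t))) := by
  have hη' : (ENNReal.ofReal η).toReal = η := ENNReal.toReal_ofReal hη.le
  have : IsFiniteMeasure (ENNReal.ofReal η • (Q ∘ₘ volume.restrict (Set.Ioc 0 t))) :=
    Measure.smul_finite _ ENNReal.ofReal_ne_top
  have : IsFiniteMeasure (ENNReal.ofReal η • (κ ∘ₘ (Q ∘ₘ volume.restrict (Set.Ioc 0 t)))) :=
    Measure.smul_finite _ ENNReal.ofReal_ne_top
  apply ext_of_forall_integral_eq_of_IsFiniteMeasure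
  intro f
  have hi : ∀ (μ : Measure X) [IsFiniteMeasure μ], Integrable f μ := fun μ _ => f.integrable μ
  rw [integral_add_measure (hi _) (hi _), integral_add_measure (hi _) (hi _),
    integral_smul_measure, integral_smul_measure, integral_dirac' _ _ f.continuous.stronglyMeasurable,
    h f f.continuous ⟨‖f‖, fun y => f.norm_coe_le_norm y⟩ t ht, hη',
    integral_bind_aux _ _ _ (hi _), integral_bind_aux κ _ _ (hi _)]
  have hκi : ∀ (μ : Measure X) [IsFiniteMeasure μ], Integrable (fun y => ∫ z, f z ∂κ y) μ := by
    intro μ _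
    refine Integrable.of_bound (f.continuous.stronglyMeasurable.integral_kernel).aestronglyMeasurable
      ‖f‖ (Eventually.of_forall fun y => ?_)
    refine (norm_integral_le_of_norm_le_const (Eventually.of_forall fun z => f.norm_coe_le_norm z)).trans ?_
    simp
  rw [integral_bind_aux Q _ _ (hκi _)]
  have hti : ∀ g : X → ℝ, StronglyMeasurable g → (∃ C, ∀ y, ‖g y‖ ≤ C) →
      Integrable (fun s => ∫ y, g y ∂Q s) (volume.restrict (Set.Ioc 0 t)) := by
    rintro g hg ⟨C, hC⟩
    refine Integrable.of_bound (hg.integral_kernel).aestronglyMeasurable C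
      (Eventually.of_forall fun y => ?_)
    refine (norm_integral_le_of_norm_le_const (Eventually.of_forall fun z => hC z)).trans ?_
    simp
  have e1 : ∀ s, ∫ y, η * (∫ z, f z ∂κ y - f y) ∂Q s =
      η * (∫ y, ∫ z, f z ∂κ y ∂Q s) - η * ∫ y, f y ∂Q s := by
    intro s
    rw [integral_const_mul, integral_sub (hκi _) (hi _), mul_sub]
  simp_rw [e1]
  rw [intervalIntegral.integral_of_le ht, integral_sub, integral_const_mul, integral_const_mul]
  · simp only [smul_eq_mul]
    ring
  · refine (hti _ f.continuous.stronglyMeasurable.integral_kernel ⟨‖f‖, fun y => ?_⟩).const_mul η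
    refine (norm_integral_le_of_norm_le_const (Eventually.of_forall fun z => f.norm_coe_le_norm z)).trans ?_
    simp
  · exact (hti _ f.continuous.stronglyMeasurable ⟨‖f‖, f.norm_coe_le_norm⟩).const_mul η

section flow
variable {X : Type*} [MeasurableSpace X] (Q : Kernel ℝ X) [IsMarkovKernel Q] (κ : Kernel X X)
    [IsMarkovKernel κ] (x : X) (η : ℝ)

theorem occ_real (S : Set X) (hS : MeasurableSet S) (t : ℝ) (ht : 0 ≤ t) :
    (Q ∘ₘ volume.restrict (Set.Ioc 0 t)).real S = ∫ s in (0:ℝ)..t, (Q s).real S := by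
  rw [intervalIntegral.integral_of_le ht, measureReal_def,
    Measure.bind_apply hS Q.measurable.aemeasurable]
  simp_rw [measureReal_def]
  rw [integral_toReal]
  · exact (Q.measurable_coe hS).aemeasurable
  · exact Eventually.of_forall fun s => measure_lt_top _ _

theorem flow_real (hη : 0 < η) (hQ : ∀ t, 0 ≤ t → Q t + ENNReal.ofReal η • (Q ∘ₘ volume.restrict (Set.Ioc 0 t)) =
      Measure.dirac x + ENNReal.ofReal η • (κ ∘ₘ (Q ∘ₘ volume.restrict (Set.Ioc 0 t))))
    (S : Set X) (hS : MeasurableSet S) (t : ℝ) (ht : 0 ≤ t) :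
    (Q t).real S + η * ∫ s in (0:ℝ)..t, (Q s).real S =
      (Measure.dirac x).real S + η * (κ ∘ₘ (Q ∘ₘ volume.restrict (Set.Ioc 0 t))).real S := by
  have h := congrArg (fun μ => (μ S).toReal) (hQ t ht)
  simp only [Measure.add_apply, Measure.smul_apply, smul_eq_mul] at h
  rw [ENNReal.toReal_add (measure_ne_top _ _) (ENNReal.mul_ne_top ENNReal.ofReal_ne_top (measure_ne_top _ _)),
    ENNReal.toReal_add (measure_ne_top _ _) (ENNReal.mul_ne_top ENNReal.ofReal_ne_top (measure_ne_top _ _)),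
    ENNReal.toReal_mul, ENNReal.toReal_mul, ENNReal.toReal_ofReal hη.le] at h
  rw [← occ_real Q S hS t ht]
  exact h

theorem flow_null (hη : 0 < η) (hQ : ∀ t, 0 ≤ t → Q t + ENNReal.ofReal η • (Q ∘ₘ volume.restrict (Set.Ioc 0 t)) =
      Measure.dirac x + ENNReal.ofReal η • (κ ∘ₘ (Q ∘ₘ volume.restrict (Set.Ioc 0 t))))
    (N : Set X) (hN : MeasurableSet N) (hx : x ∉ N) (hκ : ∀ y ∉ N, κ y N = 0)
    (t : ℝ) (ht : 0 ≤ t) : Q t N = 0 := by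
  have hb : ∀ t, 0 ≤ t → (Q t).real N ≤ 0 + η * ∫ s in (0:ℝ)..t, (Q s).real N := by
    intro t ht
    have h1 := flow_real Q κ x η hη hQ N hN t ht
    have h2 : (Measure.dirac x).real N = 0 := by
      simp [measureReal_def, Measure.dirac_apply' _ hN, hx]
    have h3 : (κ ∘ₘ (Q ∘ₘ volume.restrict (Set.Ioc 0 t))).real N ≤
        (Q ∘ₘ volume.restrict (Set.Ioc 0 t)).real N := by
      refine ENNReal.toReal_mono (measure_ne_top _ _) ?_
      rw [Measure.bind_apply hN κ.measurable.aemeasurable, ← lintegral_indicator_one hN]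
      refine lintegral_mono fun y => ?_
      by_cases hy : y ∈ N
      · simpa [hy] using prob_le_one
      · simp [hκ y hy]
    rw [occ_real Q N hN t ht] at h3
    have h4 : 0 ≤ ∫ s in (0:ℝ)..t, (Q s).real N :=
      intervalIntegral.integral_nonneg ht fun _ _ => measureReal_nonneg
    have := mul_le_mul_of_nonneg_left h3 hη.le
    have := mul_nonneg hη.le h4
    linarith
  have := gron η 0 t hη (fun s => (Q s).real N) (Q.measurable_coe hN).ennreal_toReal
    (fun _ => measureReal_nonneg) (fun _ => measureReal_le_one) (fun s hs _ => hb s hs) t ht le_rfl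
  simp only [zero_mul] at this
  have h0 : (Q t).real N = 0 := le_antisymm this measureReal_nonneg
  simpa [measureReal_eq_zero_iff] using h0

theorem flow_dom (hη : 0 < η) (hQ : ∀ t, 0 ≤ t → Q t + ENNReal.ofReal η • (Q ∘ₘ volume.restrict (Set.Ioc 0 t)) =
      Measure.dirac x + ENNReal.ofReal η • (κ ∘ₘ (Q ∘ₘ volume.restrict (Set.Ioc 0 t))))
    (s T : ℝ) (hs : 0 ≤ s) (hsT : s ≤ T) :
    Q s ≤ ENNReal.ofReal (Real.exp (η * T)) • Q T := by
  refine Measure.le_iff.2 fun S hS => ?_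
  have hm : Measurable (fun s => (Q s).real S) := (Q.measurable_coe hS).ennreal_toReal
  have hui : ∀ a b : ℝ, IntervalIntegrable (fun s => (Q s).real S) volume a b := by
    intro a b
    refine (intervalIntegrable_const (c := (1:ℝ))).mono_fun hm.aestronglyMeasurable ?_
    refine Eventually.of_forall fun t => ?_
    simp [abs_of_nonneg, measureReal_nonneg, measureReal_le_one]
  have hb : ∀ s, 0 ≤ s → s ≤ T → (Q s).real S ≤ (Q T).real S + η * ∫ r in s..T, (Q r).real S := by
    intro s hs hsT
    have h1 := flow_real Q κ x η hη hQ S hS s hs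
    have h2 := flow_real Q κ x η hη hQ S hS T (hs.trans hsT)
    have h3 : (κ ∘ₘ (Q ∘ₘ volume.restrict (Set.Ioc 0 s))).real S ≤
        (κ ∘ₘ (Q ∘ₘ volume.restrict (Set.Ioc 0 T))).real S := by
      refine ENNReal.toReal_mono (measure_ne_top _ _) ?_
      rw [Measure.bind_apply hS κ.measurable.aemeasurable,
        Measure.bind_apply hS κ.measurable.aemeasurable]
      refine lintegral_mono' (Measure.le_iff.2 fun U hU => ?_) le_rfl
      rw [Measure.bind_apply hU Q.measurable.aemeasurable,
        Measure.bind_apply hU Q.measurable.aemeasurable]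
      exact lintegral_mono_set (Set.Ioc_subset_Ioc le_rfl hsT)
    have h4 := intervalIntegral.integral_add_adjacent_intervals (hui 0 s) (hui s T)
    rw [← h4] at h2
    have := mul_le_mul_of_nonneg_left h3 hη.le
    linarith
  have hg := gron η ((Q T).real S) T hη (fun r => (Q (T - r)).real S)
    (hm.comp (measurable_const.sub measurable_id))
    (fun _ => measureReal_nonneg) (fun _ => measureReal_le_one) (by
      intro r hr hrT
      have := hb (T - r) (by linarith) (by linarith)
      rw [intervalIntegral.integral_comp_sub_left (fun r => (Q r).real S) T]
      simpa using this) (T - s) (by linarith) (by linarith)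
  simp only [sub_sub_cancel] at hg
  have hexp : Real.exp (η * (T - s)) ≤ Real.exp (η * T) := by
    apply Real.exp_le_exp.2
    nlinarith
  have h5 : (Q s).real S ≤ Real.exp (η * T) * (Q T).real S := by
    refine hg.trans ?_
    rw [mul_comm]
    exact mul_le_mul_of_nonneg_right hexp measureReal_nonneg
  rw [Measure.smul_apply, smul_eq_mul, ← ofReal_measureReal (μ := Q s), ← ofReal_measureReal (μ := Q T),
    ← ENNReal.ofReal_mul (Real.exp_pos _).le]
  exact ENNReal.ofReal_le_ofReal h5
end flow

theorem jump_kernel {X Y Z : Type*} [NormedAddCommGroup X] [MeasurableSpace X] [BorelSpace X]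
    [SecondCountableTopology X] [MeasurableSpace Y] [MeasurableSpace Z]
    (ν : Measure Z) [IsProbabilityMeasure ν] (b : X → Y → Z → X)
    (hb : Measurable fun q : X × Y × Z => b q.1 q.2.1 q.2.2) :
    ∃ K : Kernel (X × Y) X, IsMarkovKernel K ∧
      ∀ y a, K (y, a) = ν.map (fun e => y + b y a e) := by
  have hm : Measurable (fun q : (X × Y) × Z => q.1.1 + b q.1.1 q.1.2 q.2) :=
    (measurable_fst.comp measurable_fst).add (hb.comp
      ((measurable_fst.comp measurable_fst).prodMk
        ((measurable_snd.comp measurable_fst).prodMk measurable_snd)))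
  have hm' : ∀ p : X × Y, Measurable (fun e => p.1 + b p.1 p.2 e) := fun p =>
    hm.comp (measurable_const.prodMk measurable_id)
  refine ⟨⟨fun p => ν.map (fun e => p.1 + b p.1 p.2 e), ?_⟩, ⟨fun p => ?_⟩, fun y a => rfl⟩
  · refine Measure.measurable_of_measurable_coe _ fun S hS => ?_
    simp_rw [fun p : X × Y => Measure.map_apply (μ := ν) (hm' p) hS]
    exact measurable_measure_prodMk_left (hm hS)
  · exact Measure.isProbabilityMeasure_map (hm' p).aemeasurable

theorem half {X Y Z : Type*} [NormedAddCommGroup X] [MeasurableSpace X] [BorelSpace X]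
    [SecondCountableTopology X] [CompleteSpace X]
    [TopologicalSpace Y] [PolishSpace Y] [MeasurableSpace Y] [BorelSpace Y] [MeasurableSpace Z]
    (η : ℝ) (hη : 0 < η) (ν : Measure Z) [IsProbabilityMeasure ν]
    (A : Set Y) (hA : MeasurableSet A) (b : X → Y → Z → X) (r : X → Y → ℝ)
    (hb : Measurable fun q : X × Y × Z => b q.1 q.2.1 q.2.2)
    (hr : Measurable fun q : X × Y => r q.1 q.2)
    (𝒜 : Type) (law : 𝒜 → X → ℝ → Measure (X × Y))
    (hprob : ∀ c x t, IsProbabilityMeasure (law c x t))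
    (hDynkin : ∀ (w : X → ℝ), Continuous w →
      (∃ M : ℝ, ∀ y, |w y| ≤ M * (1 + ‖y‖)) →
      ∀ c x t, 0 ≤ t →
        (∫ p, w p.1 ∂ law c x t) = w x +
          ∫ s in (0:ℝ)..t,
            ∫ p, η * (∫ e, (w (p.1 + b p.1 p.2 e) - w p.1) ∂ν) ∂ law c x s)
    (hfeedback : ∀ ahat : X → Y, Measurable ahat → (∀ y, ahat y ∈ A) →
      ∃ c : 𝒜, ∀ x t, ∀ᵐ p ∂ law c x t, p.2 = ahat p.1)
    (hmom : ∀ c x,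
      Tendsto (fun t : ℝ => (∫ p, ‖p.1‖ ∂ law c x t) / t) atTop (𝓝 0))
    (wt wt' : X → ℝ) (rhot rhot' : ℝ)
    (hwtc : Continuous wt) (hwt'c : Continuous wt')
    (hwtlin : ∃ M : ℝ, ∀ y, |wt y| ≤ M * (1 + ‖y‖))
    (hwt'lin : ∃ M : ℝ, ∀ y, |wt' y| ≤ M * (1 + ‖y‖))
    (heq : ∀ x, IsLUB
      ((fun a => η * (∫ e, (wt (x + b x a e) - wt x) ∂ν) + r x a) '' A) rhot)
    (heq' : ∀ x, IsLUB
      ((fun a => η * (∫ e, (wt' (x + b x a e) - wt' x) ∂ν) + r x a) '' A) rhot') :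
    rhot' ≤ rhot := by
  classical
  have hm : Measurable (fun q : (X × Y) × Z => q.1.1 + b q.1.1 q.1.2 q.2) :=
    (measurable_fst.comp measurable_fst).add (hb.comp
      ((measurable_fst.comp measurable_fst).prodMk
        ((measurable_snd.comp measurable_fst).prodMk measurable_snd)))
  have hm' : ∀ y a, Measurable (fun e => y + b y a e) := fun y a =>
    hm.comp ((measurable_const (a := (y, a))).prodMk measurable_id)
  obtain ⟨K, hKM, hK⟩ := jump_kernel ν b hb
  refine le_of_forall_pos_le_add fun ε hε => ?_
  let F : X × Y → ℝ := fun p => η * (∫ e, (wt' (p.1 + b p.1 p.2 e) - wt' p.1) ∂ν) + r p.1 p.2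
  have hF : Measurable F := by
    refine Measurable.add (Measurable.const_mul ?_ η) hr
    have h1 : Measurable (fun q : (X × Y) × Z =>
        wt' (q.1.1 + b q.1.1 q.1.2 q.2) - wt' q.1.1) :=
      (hwt'c.measurable.comp hm).sub (hwt'c.measurable.comp (measurable_fst.comp measurable_fst))
    exact (h1.stronglyMeasurable.integral_prod_right (ν := ν)).measurable
  let B : Set (X × Y) := {p | p.2 ∈ A ∧ rhot' - ε ≤ F p}
  have hBm : MeasurableSet B := (measurable_snd hA).inter (measurableSet_le measurable_const hF)
  have hB : ∀ y, ∃ a, (y, a) ∈ B := by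
    intro y
    obtain ⟨_, ⟨a, ha, rfl⟩, h1, _⟩ := (heq' y).exists_between (sub_lt_self _ hε)
    exact ⟨a, ha, h1.le⟩
  obtain ⟨a, N, ham, hNm, h0N, hN⟩ := exists_policy B hBm hB K 0
  obtain ⟨a0, ha0, -⟩ := hB 0
  let a' : X → Y := N.piecewise (fun _ => a0) a
  have ha'm : Measurable a' := measurable_const.piecewise hNm ham
  have ha'N : ∀ y ∉ N, a' y = a y := fun y hy => by simp [a', hy]
  have ha'A : ∀ y, a' y ∈ A := by
    intro y
    by_cases hy : y ∈ N
    · simpa [a', hy] using ha0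
    · rw [ha'N y hy]; exact (hN y hy).1.1
  obtain ⟨c, hc⟩ := hfeedback a' ha'm ha'A
  let κ : Kernel X X := K.comap (fun y => (y, a' y)) (measurable_id.prodMk ha'm)
  have hκ : ∀ y, κ y = ν.map (fun e => y + b y (a' y) e) := fun y => hK y (a' y)
  have : IsMarkovKernel κ := inferInstanceAs (IsMarkovKernel (K.comap _ _))
  have hgen : ∀ w : X → ℝ, Continuous w → ∀ y, Integrable w (κ y) →
      ∫ e, (w (y + b y (a' y) e) - w y) ∂ν = ∫ z, w z ∂κ y - w y := by
    intro w hw y hi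
    rw [hκ] at hi ⊢
    rw [integrable_map_measure hw.aestronglyMeasurable (hm' _ _).aemeasurable] at hi
    rw [integral_map (hm' _ _).aemeasurable hw.aestronglyMeasurable, integral_sub (f := fun e => w (y + b y (a' y) e)) (g := fun _ => w y) hi
        (integrable_const _)]
    simp
  let P : ℝ → Measure X := fun t => (law c 0 t).map Prod.fst
  have hP : ∀ t, IsProbabilityMeasure (P t) := fun t =>
    have := hprob c 0 t
    Measure.isProbabilityMeasure_map measurable_fst.aemeasurable
  have hPi : ∀ (t : ℝ) (g : X → ℝ), StronglyMeasurable g → ∫ y, g y ∂P t = ∫ p, g p.1 ∂law c 0 t := by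
    intro t g hg
    exact integral_map measurable_fst.aemeasurable hg.aestronglyMeasurable
  have hDyn : ∀ w : X → ℝ, Continuous w → (∃ C, ∀ y, |w y| ≤ C) → ∀ t, 0 ≤ t →
      ∫ y, w y ∂P t = w 0 + ∫ s in (0:ℝ)..t, ∫ y, η * (∫ z, w z ∂κ y - w y) ∂P s := by
    rintro w hw ⟨C, hC⟩ t ht
    have hlin : ∃ M : ℝ, ∀ y, |w y| ≤ M * (1 + ‖y‖) := by
      refine ⟨C, fun y => (hC y).trans ?_⟩
      have hC0 : 0 ≤ C := (abs_nonneg _).trans (hC 0)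
      nlinarith [norm_nonneg y]
    rw [hPi t w hw.stronglyMeasurable, hDynkin w hw hlin c 0 t ht]
    congr 2
    ext s
    rw [hPi s (fun y => η * (∫ z, w z ∂κ y - w y))
      ((hw.stronglyMeasurable.integral_kernel.sub hw.stronglyMeasurable).const_mul η)]
    refine integral_congr_ae ?_
    filter_upwards [hc 0 s] with p hp
    rw [hp, hgen w hw p.1 (Integrable.of_bound hw.aestronglyMeasurable C (Eventually.of_forall hC))]
  have hPm := meas_family P hP (fun w hw hb => ⟨_, _, hDyn w hw hb⟩)
  let Q : Kernel ℝ X := ⟨fun s => P (max s 0), hPm⟩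
  have hQP : ∀ s, 0 ≤ s → Q s = P s := by
    intro s hs
    change P (max s 0) = P s
    rw [max_eq_left hs]
  have : IsMarkovKernel Q := ⟨fun s => hP (max s 0)⟩
  have hQ := dynkin_measure Q κ 0 η hη (by
    intro w hw hb t ht
    rw [hQP t ht, hDyn w hw hb t ht]
    congr 1
    refine intervalIntegral.integral_congr fun s hs => ?_
    rw [Set.uIcc_of_le ht] at hs
    rw [hQP s hs.1])
  have hnull := flow_null Q κ 0 η hη hQ N hNm h0N (fun y hy => by
    have := (hN y hy).2
    rw [← ha'N y hy] at this
    exact this)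
  have hdom := flow_dom Q κ 0 η hη hQ
  -- integrability of the first moment
  have hint : ∀ t, 0 ≤ t → Integrable (fun y => ‖y‖) (P t) := by
    intro t ht
    have hlaw : Integrable (fun p : X × Y => ‖p.1‖) (law c 0 t) := by
      have := hprob c 0 t
      by_contra hcon
      have hcon2 : ¬ Integrable (fun p : X × Y => ‖p.1‖ + 1) (law c 0 t) := by
        intro h
        apply hcon
        refine (h.sub (integrable_const (1:ℝ))).congr (Eventually.of_forall fun p => ?_)
        simp
      have e1 := hDynkin (fun y => ‖y‖) continuous_norm ⟨1, fun y => by simp⟩ c 0 t ht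
      have e2 := hDynkin (fun y => ‖y‖ + 1) (by fun_prop) ⟨1, fun y => by
        rw [abs_of_nonneg (by positivity)]; linarith⟩ c 0 t ht
      simp only [add_sub_add_right_eq_sub] at e2
      rw [integral_undef hcon] at e1
      rw [integral_undef hcon2] at e2
      linarith
    exact (integrable_map_measure continuous_norm.aestronglyMeasurable
      measurable_fst.aemeasurable).2 hlaw
  let u : X → ℝ := fun y => wt' y - wt y
  have huc : Continuous u := hwt'c.sub hwtc
  obtain ⟨M1, hM1⟩ := hwtlin
  obtain ⟨M2, hM2⟩ := hwt'lin
  have hlinint : ∀ (μ : Measure X) [IsFiniteMeasure μ], Integrable (fun y => ‖y‖) μ →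
      ∀ (w : X → ℝ) (M : ℝ), Continuous w → (∀ y, |w y| ≤ M * (1 + ‖y‖)) → Integrable w μ := by
    intro μ _ hi w M hw hwM
    refine (((integrable_const (1:ℝ)).add hi).const_mul M).mono' hw.aestronglyMeasurable
      (Eventually.of_forall hwM)
  have hulin : ∀ y, |u y| ≤ (M2 + M1) * (1 + ‖y‖) := by
    intro y
    calc |u y| ≤ |wt' y| + |wt y| := abs_sub _ _
      _ ≤ _ := by rw [add_mul]; exact add_le_add (hM2 y) (hM1 y)
  have hmain : ∀ T, 0 < T → (rhot' - ε - rhot) * T ≤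
      (M2 + M1) * (1 + ∫ p, ‖p.1‖ ∂law c 0 T) - u 0 := by
    intro T hT
    set I : Measure X := Q ∘ₘ volume.restrict (Set.Ioc 0 T) with hI
    have hQT := hQ T hT.le
    rw [← hI] at hQT
    have hnm : Measurable (fun y : X => ‖y‖ₑ) := measurable_enorm
    have hIint : Integrable (fun y => ‖y‖) I := by
      refine ⟨continuous_norm.aestronglyMeasurable, ?_⟩
      rw [hasFiniteIntegral_iff_enorm]
      simp only [enorm_norm]
      rw [hI, Measure.lintegral_bind Q.measurable.aemeasurable hnm.aemeasurable]
      have hfin : ∫⁻ y, ‖y‖ₑ ∂Q T < ⊤ := by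
        rw [hQP T hT.le]
        simpa [hasFiniteIntegral_iff_enorm] using (hint T hT.le).2
      calc ∫⁻ s in Set.Ioc 0 T, ∫⁻ y, ‖y‖ₑ ∂Q s
          ≤ ∫⁻ s in Set.Ioc 0 T, ENNReal.ofReal (Real.exp (η * T)) * ∫⁻ y, ‖y‖ₑ ∂Q T := by
            refine setLIntegral_mono' measurableSet_Ioc fun s hs => ?_
            rw [← smul_eq_mul, ← lintegral_smul_measure]
            exact lintegral_mono' (hdom s T hs.1.le hs.2) le_rfl
        _ < ⊤ := by
            rw [setLIntegral_const]
            exact ENNReal.mul_lt_top (ENNReal.mul_lt_top ENNReal.ofReal_lt_top hfin) (by simp)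
    have hsum : Integrable (fun y => ‖y‖) (Q T + ENNReal.ofReal η • I) := by
      refine Integrable.add_measure ?_ (hIint.smul_measure ENNReal.ofReal_ne_top)
      rw [hQP T hT.le]; exact hint T hT.le
    have hκI : Integrable (fun y => ‖y‖) (κ ∘ₘ I) := by
      rw [hQT] at hsum
      have := hsum.right_of_add_measure
      rwa [integrable_smul_measure (by simpa using hη) ENNReal.ofReal_ne_top] at this
    have huI := hlinint I hIint u _ huc hulin
    have huκI := hlinint _ hκI u _ huc hulin
    have huQ := hlinint _ (hint T hT.le) u _ huc hulin
    have e := congrArg (fun μ => ∫ y, u y ∂μ) hQT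
    rw [hQP T hT.le, integral_add_measure huQ (huI.smul_measure ENNReal.ofReal_ne_top),
      integral_add_measure (hlinint _ (by
        rw [hQT] at hsum; exact hsum.left_of_add_measure) u _ huc hulin)
        (huκI.smul_measure ENNReal.ofReal_ne_top), integral_smul_measure, integral_smul_measure,
      integral_dirac' _ _ huc.stronglyMeasurable, ENNReal.toReal_ofReal hη.le,
      integral_bind_aux κ I u huκI] at e
    have hIN : ∀ᵐ y ∂I, y ∉ N := by
      have : I N = 0 := by
        rw [hI, Measure.bind_apply hNm Q.measurable.aemeasurable,
          setLIntegral_congr_fun measurableSet_Ioc (g := fun _ => 0)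
            (fun s hs => hnull s hs.1.le)]
        simp
      exact measure_eq_zero_iff_ae_notMem.1 this
    have hIκ := Measure.ae_integrable_of_integrable_comp hκI
    have hκuI : Integrable (fun y => ∫ z, u z ∂κ y) I := by
      refine (Measure.integrable_integral_norm_of_integrable_comp huκI).mono'
        huc.stronglyMeasurable.integral_kernel.aestronglyMeasurable
        (Eventually.of_forall fun y => norm_integral_le_integral_norm _)
    have hle : ∫ y, (rhot' - ε - rhot) ∂I ≤ ∫ y, η * (∫ z, u z ∂κ y - u y) ∂I := by
      refine integral_mono_ae (integrable_const _) ((hκuI.sub huI).const_mul η) ?_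
      filter_upwards [hIN, hIκ] with y hyN hyi
      have i1 := hlinint (κ y) hyi wt _ hwtc hM1
      have i2 := hlinint (κ y) hyi wt' _ hwt'c hM2
      have g1 := hgen wt hwtc y i1
      have g2 := hgen wt' hwt'c y i2
      have b2 : rhot' - ε ≤ F (y, a' y) := by
        rw [ha'N y hyN]; exact (hN y hyN).1.2
      have b1 := (heq y).1 ⟨a' y, ha'A y, rfl⟩
      simp only [F] at b1 b2
      rw [g1] at b1
      rw [g2] at b2
      have : ∫ z, u z ∂κ y = ∫ z, wt' z ∂κ y - ∫ z, wt z ∂κ y := integral_sub i2 i1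
      rw [this]
      simp only [u]
      linarith
    have hIu : I.real Set.univ = T := by
      rw [hI, occ_real Q _ MeasurableSet.univ T hT.le]
      simp
    rw [integral_const, hIu, smul_eq_mul, integral_const_mul, integral_sub hκuI huI] at hle
    have hup : ∫ y, u y ∂P T ≤ (M2 + M1) * (1 + ∫ p, ‖p.1‖ ∂law c 0 T) := by
      rw [← hPi T (fun y => ‖y‖) continuous_norm.stronglyMeasurable]
      have h1 : ∫ y, u y ∂P T ≤ ∫ y, (M2 + M1) * (1 + ‖y‖) ∂P T :=
        integral_mono huQ (((integrable_const (1:ℝ)).add (hint T hT.le)).const_mul _)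
          (fun y => (le_abs_self _).trans (hulin y))
      rw [integral_const_mul, integral_add (integrable_const _) (hint T hT.le)] at h1
      simpa using h1
    simp only [smul_eq_mul] at e
    linarith
  have hlim : Tendsto (fun T : ℝ => ((M2 + M1) - u 0) / T +
      (M2 + M1) * ((∫ p, ‖p.1‖ ∂law c 0 T) / T)) atTop (𝓝 (0 + (M2 + M1) * 0)) :=
    (tendsto_const_nhds.div_atTop tendsto_id).add ((hmom c 0).const_mul _)
  have hfin : rhot' - ε - rhot ≤ 0 + (M2 + M1) * 0 := by
    refine ge_of_tendsto hlim ?_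
    filter_upwards [eventually_gt_atTop 0] with T hT
    have := hmain T hT
    rw [← mul_div_assoc, ← add_div, le_div_iff₀ hT]
    linarith
  linarith

end ErgAux

/-- Uniqueness of the ergodic constant for the pure-jump HJB equation
(Theorem 2.1 / Lemma A.4 of the paper).  The controlled pure-jump dynamics are
encoded through the time-marginal laws `law c x t` of `(X_t^{x,c}, α_t)` for each
admissible control `c`: they are probability measures supported on controls with
values in the compact set `A`, start from `x`, satisfy the Dynkin formula
associated with the jump generator `w ↦ η ∫ (w(· + b(·,a,e)) - w) ν(de)` against
every continuous function of linear growth, admit Markov feedback controls, and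
have sublinear first moments `E[|X_t|]/t → 0`.  If `(wt, rhot)` and `(wt', rhot')`
are two continuous linear-growth solutions of the ergodic equation
`ρ = sup_{a ∈ A} { η ∫ [w(x + b(x,a,e)) - w(x)] ν(de) + r(x,a) }`, then
`rhot = rhot'`. -/
theorem stmt_4 {d d' m : ℕ} (η : ℝ) (hη : 0 < η)
    (ν : Measure (EuclideanSpace ℝ (Fin d'))) [IsProbabilityMeasure ν]
    (A : Set (EuclideanSpace ℝ (Fin m))) (hA : IsCompact A)
    (b : EuclideanSpace ℝ (Fin d) → EuclideanSpace ℝ (Fin m) →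
      EuclideanSpace ℝ (Fin d') → EuclideanSpace ℝ (Fin d))
    (r : EuclideanSpace ℝ (Fin d) → EuclideanSpace ℝ (Fin m) → ℝ)
    (hb : Measurable fun q : EuclideanSpace ℝ (Fin d) × EuclideanSpace ℝ (Fin m) ×
      EuclideanSpace ℝ (Fin d') => b q.1 q.2.1 q.2.2)
    (hr : Measurable fun q : EuclideanSpace ℝ (Fin d) × EuclideanSpace ℝ (Fin m) =>
      r q.1 q.2)
    -- the admissible controls and the laws of `(X_t^{x,α}, α_t)`
    (𝒜 : Type) (law : 𝒜 → EuclideanSpace ℝ (Fin d) → ℝ →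
      Measure (EuclideanSpace ℝ (Fin d) × EuclideanSpace ℝ (Fin m)))
    (hprob : ∀ c x t, IsProbabilityMeasure (law c x t))
    (hsupp : ∀ c x t, ∀ᵐ p ∂ law c x t, p.2 ∈ A)
    (hinit : ∀ c x, Measure.map Prod.fst (law c x 0) = Measure.dirac x)
    -- Dynkin formula for continuous functions of linear growth
    (hDynkin : ∀ (w : EuclideanSpace ℝ (Fin d) → ℝ), Continuous w →
      (∃ M : ℝ, ∀ y, |w y| ≤ M * (1 + ‖y‖)) →
      ∀ c x t, 0 ≤ t →
        (∫ p, w p.1 ∂ law c x t) = w x +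
          ∫ s in (0:ℝ)..t,
            ∫ p, η * (∫ e, (w (p.1 + b p.1 p.2 e) - w p.1) ∂ν) ∂ law c x s)
    -- Markov feedback controls exist
    (hfeedback : ∀ ahat : EuclideanSpace ℝ (Fin d) → EuclideanSpace ℝ (Fin m),
      Measurable ahat → (∀ y, ahat y ∈ A) →
      ∃ c : 𝒜, ∀ x t, ∀ᵐ p ∂ law c x t, p.2 = ahat p.1)
    -- sublinear growth of first moments, for every admissible control
    (hmom : ∀ c x,
      Tendsto (fun t : ℝ => (∫ p, ‖p.1‖ ∂ law c x t) / t) atTop (𝓝 0))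
    -- two continuous linear-growth solutions of the ergodic equation
    (wt wt' : EuclideanSpace ℝ (Fin d) → ℝ) (rhot rhot' : ℝ)
    (hwtc : Continuous wt) (hwt'c : Continuous wt')
    (hwtlin : ∃ M : ℝ, ∀ y, |wt y| ≤ M * (1 + ‖y‖))
    (hwt'lin : ∃ M : ℝ, ∀ y, |wt' y| ≤ M * (1 + ‖y‖))
    (heq : ∀ x, IsLUB
      ((fun a => η * (∫ e, (wt (x + b x a e) - wt x) ∂ν) + r x a) '' A) rhot)
    (heq' : ∀ x, IsLUB
      ((fun a => η * (∫ e, (wt' (x + b x a e) - wt' x) ∂ν) + r x a) '' A) rhot') :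
    rhot = rhot' := by
  exact le_antisymm
    (ErgAux.half η hη ν A hA.measurableSet b r hb hr 𝒜 law hprob hDynkin hfeedback hmom
      wt' wt rhot' rhot hwt'c hwtc hwt'lin hwtlin heq' heq)
    (ErgAux.half η hη ν A hA.measurableSet b r hb hr 𝒜 law hprob hDynkin hfeedback hmom
      wt wt' rhot rhot' hwtc hwt'c hwtlin hwt'lin heq heq')
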